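/- Let N ∈ ℕ and let q, a, t ∈ ℂ satisfy (q;q)_N ≠ 0 and (t;q)_N ≠ 0. Then F_N(a,1;t) = (atq;q)_N / (t;q)_N. -/

import Mathlib

/-!
Since `(1 * q; q)_n = (q; q)_n`, for `b = 1` these factors cancel in each summand, and the claim
becomes the `q`-Chu–Vandermonde identity
`∑ n, [N, n]_q (x; q)_n (y; q)_{N - n} y ^ n = (x y; q)_N` at `x = a q`, `y = t`.
This is proved by induction on `N` (`sum_qBinom_mul`): multiplying the `n`-th summand by
`1 - x y q ^ N = (1 - y q ^ (N - n)) + y q ^ (N - n) (1 - x q ^ n)` raises the index of either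
`(y; q)_{N - n}` or `(x; q)_n`, and the `q`-Pascal rule
`[N + 1, m + 1] = [N, m + 1] + q ^ (N - m) [N, m]` recombines the two resulting sums.
-/

open Finset

/-- The q-Pochhammer symbol (z; q)_n = prod_{j=0}^{n-1} (1 - z q^j). -/
noncomputable def qPoch (q z : ℂ) (n : ℕ) : ℂ :=
  ∏ j ∈ Finset.range n, (1 - z * q ^ j)

/-- The Gaussian binomial coefficient [N, n]_q = (q;q)_N / ((q;q)_n (q;q)_{N-n}). -/
noncomputable def qBinom (q : ℂ) (N n : ℕ) : ℂ :=
  qPoch q q N / (qPoch q q n * qPoch q q (N - n))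

/-- The finite analogue of Fine's function,
F_N(a, b; t) = sum_{n=0}^{N} [N,n]_q (aq;q)_n (t;q)_{N-n} (q;q)_n t^n / ((bq;q)_n (t;q)_N). -/
noncomputable def fineF (q a b t : ℂ) (N : ℕ) : ℂ :=
  ∑ n ∈ Finset.range (N + 1),
    qBinom q N n * (qPoch q (a * q) n * qPoch q t (N - n) * qPoch q q n * t ^ n) /
      (qPoch q (b * q) n * qPoch q t N)

lemma qPoch_succ (q z : ℂ) (n : ℕ) :
    qPoch q z (n + 1) = qPoch q z n * (1 - z * q ^ n) :=
  Finset.prod_range_succ _ _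

lemma qPoch_ne_zero_of_le {q z : ℂ} {n N : ℕ} (h : n ≤ N) (hN : qPoch q z N ≠ 0) :
    qPoch q z n ≠ 0 := by
  rw [qPoch, Finset.prod_ne_zero_iff] at hN ⊢
  intro j hj
  exact hN j (Finset.range_subset_range.2 h hj)

lemma qBinom_zero_right {q : ℂ} {N : ℕ} (hN : qPoch q q N ≠ 0) : qBinom q N 0 = 1 := by
  have h0 : qPoch q q 0 = 1 := Finset.prod_range_zero _
  simp [qBinom, h0, hN]

lemma qBinom_self {q : ℂ} {N : ℕ} (hN : qPoch q q N ≠ 0) : qBinom q N N = 1 := by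
  have h0 : qPoch q q 0 = 1 := Finset.prod_range_zero _
  simp [qBinom, h0, hN]

/-- The `q`-Pascal rule. The bound `m < N` is needed: for `m = N` the truncated subtraction
makes `qBinom q N (N + 1)` a nonzero junk value. -/
lemma qBinom_succ_succ {q : ℂ} {N m : ℕ} (hm : m < N) (hN : qPoch q q (N + 1) ≠ 0) :
    qBinom q (N + 1) (m + 1) = qBinom q N (m + 1) + q ^ (N - m) * qBinom q N m := by
  obtain ⟨k, rfl⟩ := Nat.exists_eq_add_of_lt hm
  have e1 : m + k + 1 + 1 - (m + 1) = k + 1 := by omega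
  have e2 : m + k + 1 - (m + 1) = k := by omega
  have e3 : m + k + 1 - m = k + 1 := by omega
  have hm1 : qPoch q q (m + 1) ≠ 0 := qPoch_ne_zero_of_le (by omega) hN
  have hk1 : qPoch q q (k + 1) ≠ 0 := qPoch_ne_zero_of_le (by omega) hN
  simp only [qBinom, e1, e2, e3]
  rw [qPoch_succ q q (m + k + 1)]
  rw [qPoch_succ] at hm1 hk1
  rw [qPoch_succ q q m, qPoch_succ q q k]
  obtain ⟨hm0, hm1⟩ := mul_ne_zero_iff.1 hm1
  obtain ⟨hk0, hk1⟩ := mul_ne_zero_iff.1 hk1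
  field_simp
  ring

/-- The `q`-Chu–Vandermonde identity. -/
lemma sum_qBinom_mul (q x y : ℂ) (N : ℕ) (hN : qPoch q q N ≠ 0) :
    ∑ n ∈ Finset.range (N + 1),
      qBinom q N n * (qPoch q x n * qPoch q y (N - n) * y ^ n) = qPoch q (x * y) N := by
  induction N with
  | zero => simp [qBinom, qPoch]
  | succ N ih =>
    have hN' : qPoch q q N ≠ 0 := qPoch_ne_zero_of_le N.le_succ hN
    have split : qPoch q (x * y) (N + 1) =
        ∑ n ∈ Finset.range (N + 1),
          qBinom q N n * (qPoch q x n * qPoch q y (N + 1 - n) * y ^ n) +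
        ∑ n ∈ Finset.range (N + 1),
          q ^ (N - n) * qBinom q N n * (qPoch q x (n + 1) * qPoch q y (N - n) * y ^ (n + 1)) := by
      rw [qPoch_succ, ← ih hN', Finset.sum_mul, ← Finset.sum_add_distrib]
      refine Finset.sum_congr rfl fun n hn => ?_
      obtain ⟨k, rfl⟩ := Nat.exists_eq_add_of_le (Nat.lt_succ_iff.1 (Finset.mem_range.1 hn))
      have e1 : n + k + 1 - n = k + 1 := by omega
      rw [e1, Nat.add_sub_cancel_left, qPoch_succ q y, qPoch_succ q x]
      ring
    -- The extreme terms are separated because the Pascal rule covers only `0 < n < N + 1`.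
    rw [split, Finset.sum_range_succ, Finset.sum_range_succ',
      Finset.sum_range_succ' (fun n => qBinom q N n * _),
      Finset.sum_range_succ (fun n => q ^ (N - n) * qBinom q N n * _),
      qBinom_zero_right hN, qBinom_zero_right hN', qBinom_self hN, qBinom_self hN']
    have mid : ∑ n ∈ Finset.range N, qBinom q (N + 1) (n + 1) *
          (qPoch q x (n + 1) * qPoch q y (N + 1 - (n + 1)) * y ^ (n + 1)) =
        ∑ n ∈ Finset.range N, qBinom q N (n + 1) *
          (qPoch q x (n + 1) * qPoch q y (N + 1 - (n + 1)) * y ^ (n + 1)) +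
        ∑ n ∈ Finset.range N, q ^ (N - n) * qBinom q N n *
          (qPoch q x (n + 1) * qPoch q y (N - n) * y ^ (n + 1)) := by
      rw [← Finset.sum_add_distrib]
      refine Finset.sum_congr rfl fun n hn => ?_
      rw [qBinom_succ_succ (Finset.mem_range.1 hn) hN, Nat.add_sub_add_right]
      ring
    rw [mid]
    simp only [Nat.sub_self, pow_zero]
    ring

theorem fineF_b_one (N : ℕ) (q a t : ℂ)
    (hq : qPoch q q N ≠ 0) (ht : qPoch q t N ≠ 0) :
    fineF q a 1 t N = qPoch q (a * t * q) N / qPoch q t N := by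
  rw [show a * t * q = a * q * t by ring, ← sum_qBinom_mul q (a * q) t N hq, fineF,
    Finset.sum_div]
  refine Finset.sum_congr rfl fun n hn => ?_
  have hn' : qPoch q q n ≠ 0 :=
    qPoch_ne_zero_of_le (Nat.lt_succ_iff.1 (Finset.mem_range.1 hn)) hq
  rw [one_mul]
  field_simp
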